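/- Let Y be a compact tiled surface embedded in a boundary reduced tiled surface Z. Then the BR-closure BR(Y↪Z) is compact. -/

import Mathlib

/-!
Formalization preamble for "Core Surfaces" (Magee–Puder).

We work with a fixed combinatorial (CW) model.  The surface `Σ_g` has one vertex,
`2g` directed labeled edges (the label `2i` plays the role of `a_{i+1}` and `2i+1`
the role of `b_{i+1}`), and one `4g`-gon glued along `[a₁,b₁]⋯[a_g,b_g]`.

* `Gamma g` is the surface group, presented by the single relator.
* A `Complex g` is a combinatorial 2-complex with directed, labeled edges and
  2-cells given by their boundary walks; coverings of `Σ_g` are the complexes in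
  which every vertex has exactly one incoming/outgoing edge of each label, every
  walk reading the relator is closed, and every closed walk reading the relator
  bounds exactly one face (`IsCovering`).  A tiled surface is a complex that
  embeds into such a covering (`IsTiledSurface`).
* Blocks, chains, boundary cycles (via the ribbon structure coming from the fixed
  cyclic order of the `4g` half-edges around a vertex of `Σ_g`), boundary-reduced
  and strongly boundary-reduced surfaces are defined combinatorially.
* Homotopy of edge-walks is the edge-path-group homotopy: backtrack insertions and
  insertions of boundaries of (present) faces.
* `cover g J` is the covering space `J\~Σ_g` of `Σ_g` associated to a subgroup
  `J ≤ Γ_g` (vertices = right cosets), and `coreSub g J` is the core surface of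
  `J`, defined exactly as in the paper: the union of all shortest representative
  cycles of essential free-homotopy classes, together with all components of the
  complement containing finitely many `4g`-gons.
-/

noncomputable section

namespace CS

/-- Signed letters over the generators `a₁,b₁,…,a_g,b_g` of `Γ_g`
(`a_{i+1} ↦ 2i`, `b_{i+1} ↦ 2i+1`); `true` means a positive letter. -/
abbrev Letter (g : ℕ) := Fin (2 * g) × Bool

/-- The label of the `p`-th letter of the relator `[a₁,b₁][a₂,b₂]⋯[a_g,b_g]`. -/
def relLabel (g : ℕ) (p : Fin (4 * g)) : Fin (2 * g) :=
  ⟨2 * ((p : ℕ) / 4) + ((p : ℕ) % 4) % 2, by have := p.2; omega⟩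

/-- The sign of the `p`-th letter of the relator. -/
def relSign (g : ℕ) (p : Fin (4 * g)) : Bool := decide ((p : ℕ) % 4 < 2)

/-- The relator `[a₁,b₁][a₂,b₂]⋯[a_g,b_g]` as a word (list of signed letters). -/
def relatorWord (g : ℕ) : List (Letter g) :=
  (List.finRange (4 * g)).map fun p => (relLabel g p, relSign g p)

/-- The relator as an element of the free group on the `2g` generators. -/
def relatorF (g : ℕ) : FreeGroup (Fin (2 * g)) :=
  ((relatorWord g).map fun l => if l.2 then FreeGroup.of l.1 else (FreeGroup.of l.1)⁻¹).prod

/-- The surface group `Γ_g = ⟨a₁,b₁,…,a_g,b_g ∣ [a₁,b₁]⋯[a_g,b_g]⟩`. -/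
abbrev Gamma (g : ℕ) := PresentedGroup ({relatorF g} : Set (FreeGroup (Fin (2 * g))))

/-- The image of a signed letter in `Γ_g`. -/
def letterG {g : ℕ} (l : Letter g) : Gamma g :=
  if l.2 then PresentedGroup.of l.1 else (PresentedGroup.of l.1)⁻¹

/-- The image of a word in `Γ_g`. -/
def wordG {g : ℕ} (w : List (Letter g)) : Gamma g := (w.map letterG).prod

/-- `ℓ(γ^{Γ_g})`: the minimal length of a word in the generators representing the
conjugacy class of `γ` in `Γ_g`. -/
def conjLen {g : ℕ} (γ : Gamma g) : ℕ :=
  sInf {n | ∃ w : List (Letter g), w.length = n ∧ ∃ x : Gamma g, x * wordG w * x⁻¹ = γ}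

/-! ### Half-edge positions around a vertex of `Σ_g`

The `4g` half-edges around the vertex `o` of `Σ_g` come in the (clockwise) cyclic
order `a₁`-out, `b₁`-in, `a₁`-in, `b₁`-out, `a₂`-out, `b₂`-in, `a₂`-in, `b₂`-out, …
-/

/-- Position of the outgoing `ℓ`-labeled half-edge in the cyclic order. -/
def posOut {g : ℕ} (ℓ : Fin (2 * g)) : ℕ :=
  if (ℓ : ℕ) % 2 = 0 then 2 * (ℓ : ℕ) else 2 * (ℓ : ℕ) + 1

/-- Position of the incoming `ℓ`-labeled half-edge in the cyclic order. -/
def posIn {g : ℕ} (ℓ : Fin (2 * g)) : ℕ :=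
  if (ℓ : ℕ) % 2 = 0 then 2 * (ℓ : ℕ) + 2 else 2 * (ℓ : ℕ) - 1

/-- The position of the half-edge through which a traversal of a dart with signed
letter `s` *arrives* at its terminal vertex. -/
def posArr {g : ℕ} (s : Letter g) : ℕ := if s.2 then posIn s.1 else posOut s.1

/-- The position of the half-edge through which a traversal of a dart with signed
letter `s` *leaves* its initial vertex. -/
def posLv {g : ℕ} (s : Letter g) : ℕ := if s.2 then posOut s.1 else posIn s.1

/-- The number of half-edges strictly between the arrival half-edge of `s` and the
departure half-edge of `t`, in the clockwise cyclic order of the `4g` half-edges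
around a vertex. -/
def gapN {g : ℕ} (s t : Letter g) : ℕ := (posLv t + 4 * g - (posArr s + 1)) % (4 * g)

/-! ### Combinatorial complexes -/

/-- A combinatorial at-most-2-dimensional CW-complex with directed edges labeled by
the generators of `Γ_g`, and 2-cells recorded by their boundary walks (lists of
darts, i.e. edges with a direction of traversal). -/
structure Complex (g : ℕ) where
  V : Type
  E : Type
  F : Type
  src : E → V
  dst : E → V
  lab : E → Fin (2 * g)
  bdry : F → List (E × Bool)

namespace Complex

variable {g : ℕ} (Y : Complex g)

/-- Darts: edges together with a direction of traversal (`true` = forward). -/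
abbrev D := Y.E × Bool

/-- The initial vertex of a dart. -/
def dTail (d : Y.D) : Y.V := if d.2 then Y.src d.1 else Y.dst d.1

/-- The terminal vertex of a dart. -/
def dHead (d : Y.D) : Y.V := if d.2 then Y.dst d.1 else Y.src d.1

/-- The reversal of a dart. -/
def dRev (d : Y.D) : Y.D := (d.1, !d.2)

/-- The signed letter read by a dart. -/
def dLet (d : Y.D) : Letter g := (Y.lab d.1, d.2)

/-- The word read along a list of darts. -/
def wordOf (l : List Y.D) : List (Letter g) := l.map Y.dLet

/-- The reversed walk. -/
def revW (l : List Y.D) : List Y.D := (l.map Y.dRev).reverse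

/-- `WalkFrom u v l` : `l` is a walk (edge-path) from `u` to `v`. -/
inductive WalkFrom : Y.V → Y.V → List Y.D → Prop
  | nil (v : Y.V) : WalkFrom v v []
  | cons (d : Y.D) {v : Y.V} {l : List Y.D} :
      WalkFrom (Y.dHead d) v l → WalkFrom (Y.dTail d) v (d :: l)

/-- All darts of `l` use edges from the set `sE`. -/
def InSet (sE : Set Y.E) (l : List Y.D) : Prop := ∀ d ∈ l, d.1 ∈ sE

/-- Two darts are adjacent (can be traversed consecutively). -/
def adj (d d' : Y.D) : Prop := Y.dHead d = Y.dTail d'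

/-- A nonempty closed walk. -/
def IsCycle (c : List Y.D) : Prop := c ≠ [] ∧ ∃ v, Y.WalkFrom v v c

/-- **P1**: at most one incoming and at most one outgoing `ℓ`-labeled edge at every
vertex, for every label `ℓ`. -/
def P1 : Prop :=
  (∀ e e' : Y.E, Y.src e = Y.src e' → Y.lab e = Y.lab e' → e = e') ∧
  (∀ e e' : Y.E, Y.dst e = Y.dst e' → Y.lab e = Y.lab e' → e = e')

/-- **P2**: every walk reading a word equal to `1` in `Γ_g` is closed. -/
def P2 : Prop :=
  ∀ (u v : Y.V) (l : List Y.D), Y.WalkFrom u v l → wordG (Y.wordOf l) = 1 → u = v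

/-- **P3**: every 2-cell is glued along a closed walk reading the relator
`[a₁,b₁]⋯[a_g,b_g]`, and every such closed walk bounds at most one 2-cell. -/
def P3 : Prop :=
  (∀ f : Y.F, (∃ v, Y.WalkFrom v v (Y.bdry f)) ∧ Y.wordOf (Y.bdry f) = relatorWord g) ∧
  Function.Injective Y.bdry

/-- A combinatorial covering space of `Σ_g`: every vertex has exactly one outgoing
and one incoming edge of each label, every walk reading the relator is closed, and
every closed walk reading the relator bounds exactly one `4g`-gon. -/
def IsCovering : Prop :=
  Y.P1 ∧ Y.P3 ∧
  (∀ (v : Y.V) (ℓ : Fin (2 * g)), ∃ e, Y.src e = v ∧ Y.lab e = ℓ) ∧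
  (∀ (v : Y.V) (ℓ : Fin (2 * g)), ∃ e, Y.dst e = v ∧ Y.lab e = ℓ) ∧
  (∀ (u v : Y.V) (l : List Y.D), Y.WalkFrom u v l → Y.wordOf l = relatorWord g → u = v) ∧
  (∀ (v : Y.V) (l : List Y.D), Y.WalkFrom v v l → Y.wordOf l = relatorWord g →
    ∃ f, Y.bdry f = l)

end Complex

/-- A morphism of labeled complexes: maps cells to cells of the same dimension and
respects sources, targets, labels and face boundaries (equivalently, commutes with
the immersions to `Σ_g`). -/
structure Hom {g : ℕ} (Y Z : Complex g) where
  mV : Y.V → Z.V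
  mE : Y.E → Z.E
  mF : Y.F → Z.F
  hsrc : ∀ e, Z.src (mE e) = mV (Y.src e)
  hdst : ∀ e, Z.dst (mE e) = mV (Y.dst e)
  hlab : ∀ e, Z.lab (mE e) = Y.lab e
  hbdry : ∀ f, Z.bdry (mF f) = (Y.bdry f).map fun d => (mE d.1, d.2)

namespace Hom

variable {g : ℕ} {Y Z : Complex g}

/-- The induced map on darts. -/
def mD (φ : Hom Y Z) (d : Y.D) : Z.D := (φ.mE d.1, d.2)

/-- Injectivity (an embedding of complexes). -/
def Inj (φ : Hom Y Z) : Prop :=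
  Function.Injective φ.mV ∧ Function.Injective φ.mE ∧ Function.Injective φ.mF

end Hom

namespace Complex

variable {g : ℕ} (Y : Complex g)

/-- A tiled surface: a complex which embeds into a combinatorial covering space of
`Σ_g` (compatibly with directions and labels). -/
def IsTiledSurface : Prop :=
  ∃ Z : Complex g, Z.IsCovering ∧ ∃ φ : Hom Y Z, φ.Inj

/-- Connectivity of a complex (any two vertices are joined by a walk). -/
def Connected : Prop := Nonempty Y.V ∧ ∀ v w : Y.V, ∃ l, Y.WalkFrom v w l

/-! ### Blocks and chains -/

/-- A block: a nonempty walk such that successive darts have no half-edges between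
them (hence it reads a subword of the cyclic relator, of length at most `4g`). -/
def IsBlock (l : List Y.D) : Prop :=
  l ≠ [] ∧ l.length ≤ 4 * g ∧
  List.Chain' (fun d d' => Y.adj d d' ∧ gapN (Y.dLet d) (Y.dLet d') = 0) l

/-- Two blocks are consecutive: concatenation is a walk and there is exactly one
half-edge between the last dart of the first and the first dart of the second. -/
def chainStep (b b' : List Y.D) : Prop :=
  ∃ d d', b.getLast? = some d ∧ b'.head? = some d' ∧ Y.adj d d' ∧
    gapN (Y.dLet d) (Y.dLet d') = 1

/-- A chain: a nonempty sequence of consecutive blocks. -/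
def IsChain (bs : List (List Y.D)) : Prop :=
  bs ≠ [] ∧ (∀ b ∈ bs, Y.IsBlock b) ∧ List.Chain' Y.chainStep bs

/-- A cyclic chain: a chain whose blocks pave an entire cycle. -/
def IsCyclicChain (bs : List (List Y.D)) : Prop :=
  Y.IsChain bs ∧ ∃ b b', bs.getLast? = some b ∧ bs.head? = some b' ∧ Y.chainStep b b'

/-- A long chain: a chain of consecutive blocks of lengths `2g, 2g−1, …, 2g−1, 2g`. -/
def IsLongChain (bs : List (List Y.D)) : Prop :=
  Y.IsChain bs ∧ ∃ k, bs.map List.length = 2 * g :: (List.replicate k (2 * g - 1) ++ [2 * g])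

/-- A half-chain: a cyclic chain all of whose blocks have length `2g − 1`. -/
def IsHalfChain (bs : List (List Y.D)) : Prop :=
  Y.IsCyclicChain bs ∧ ∀ b ∈ bs, b.length = 2 * g - 1

/-! ### Boundary cycles of the thick version (relative to sets of present edges and
faces), via the ribbon structure -/

/-- `nextD sE d d'`: among darts (with edge in `sE`) leaving the head of `d`, the
dart `d'` is the first one in clockwise order after the arrival half-edge of `d`.
This is the successor map whose orbits trace the boundary components of the thick
version of the ribbon graph. -/
def nextD (sE : Set Y.E) (d d' : Y.D) : Prop :=
  d'.1 ∈ sE ∧ Y.adj d d' ∧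
  ∀ d'' : Y.D, d''.1 ∈ sE → Y.adj d d'' →
    gapN (Y.dLet d) (Y.dLet d') ≤ gapN (Y.dLet d) (Y.dLet d'')

/-- The corner between the consecutive darts `d, d'` is filled by a face from `sF`. -/
def faceStep (sF : Set Y.F) (d d' : Y.D) : Prop :=
  ∃ f ∈ sF, [d, d'] <:+: (Y.bdry f ++ Y.bdry f)

/-- One step along the boundary of the thick version. -/
def bStep (sE : Set Y.E) (sF : Set Y.F) (d d' : Y.D) : Prop :=
  d.1 ∈ sE ∧ Y.nextD sE d d' ∧ ¬ Y.faceStep sF d d'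

/-- A (finite segment of a) boundary cycle of the thick version. -/
def BPath (sE : Set Y.E) (sF : Set Y.F) (l : List Y.D) : Prop :=
  l ≠ [] ∧ Y.InSet sE l ∧ List.Chain' (Y.bStep sE sF) l

/-- A (finite) boundary cycle of the thick version. -/
def BCycle (sE : Set Y.E) (sF : Set Y.F) (l : List Y.D) : Prop :=
  Y.BPath sE sF l ∧ ∃ d d', l.getLast? = some d ∧ l.head? = some d' ∧ Y.bStep sE sF d d'

/-- A dart lying on the boundary of the thick version. -/
def IsBDart (sE : Set Y.E) (sF : Set Y.F) (d : Y.D) : Prop :=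
  d.1 ∈ sE ∧ ∃ d', Y.nextD sE d d' ∧ ¬ Y.faceStep sF d d'

/-- Boundary reduced: no boundary cycle contains a long block (length `≥ 2g+1`) or
a long chain. -/
def BoundaryReduced (sE : Set Y.E) (sF : Set Y.F) : Prop :=
  (∀ l, Y.BPath sE sF l → ¬ (Y.IsBlock l ∧ 2 * g + 1 ≤ l.length)) ∧
  (∀ bs, Y.IsLongChain bs → ¬ Y.BPath sE sF bs.flatten)

/-- Strongly boundary reduced: no boundary cycle contains a half-block (length
exactly `2g`) or a half-chain. -/
def StronglyBoundaryReduced (sE : Set Y.E) (sF : Set Y.F) : Prop :=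
  (∀ l, Y.BPath sE sF l → ¬ (Y.IsBlock l ∧ l.length = 2 * g)) ∧
  (∀ bs, Y.IsHalfChain bs → ¬ Y.BCycle sE sF bs.flatten)

/-! ### Combinatorial homotopy of walks -/

/-- A closed walk traversing the boundary of a face from `sF` (in either direction,
starting anywhere). -/
def faceLoop (sF : Set Y.F) (b : List Y.D) : Prop :=
  ∃ f ∈ sF, ∃ n, b = (Y.bdry f).rotate n ∨ b = Y.revW ((Y.bdry f).rotate n)

/-- Elementary homotopy move: insertion of a backtrack or of a face boundary. -/
def elemMove (sE : Set Y.E) (sF : Set Y.F) (l l' : List Y.D) : Prop :=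
  (∃ (l₁ l₂ : List Y.D) (d : Y.D), d.1 ∈ sE ∧ l = l₁ ++ l₂ ∧ l' = l₁ ++ d :: Y.dRev d :: l₂) ∨
  (∃ l₁ l₂ b, Y.faceLoop sF b ∧ l = l₁ ++ l₂ ∧ l' = l₁ ++ b ++ l₂)

/-- Homotopy (rel endpoints) of walks from `u` to `v`, inside the subcomplex with
edge set `sE` and face set `sF`. -/
def Homotopic (sE : Set Y.E) (sF : Set Y.F) (u v : Y.V) (c c' : List Y.D) : Prop :=
  Relation.EqvGen
    (fun a b =>
      Y.WalkFrom u v a ∧ Y.WalkFrom u v b ∧ Y.InSet sE a ∧ Y.InSet sE b ∧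
        (Y.elemMove sE sF a b ∨ Y.elemMove sE sF b a)) c c'

/-- A closed walk which is null-homotopic. -/
def NullHomotopic (sE : Set Y.E) (sF : Set Y.F) (c : List Y.D) : Prop :=
  ∃ v, Y.WalkFrom v v c ∧ Y.Homotopic sE sF v v c []

/-- An essential cycle: a nonempty closed walk which is not null-homotopic. -/
def Essential (sE : Set Y.E) (sF : Set Y.F) (c : List Y.D) : Prop :=
  Y.IsCycle c ∧ Y.InSet sE c ∧ ¬ Y.NullHomotopic sE sF c

/-- Free homotopy of closed walks. -/
def FreelyHomotopic (sE : Set Y.E) (sF : Set Y.F) (c c' : List Y.D) : Prop :=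
  ∃ u v q, Y.WalkFrom u u c ∧ Y.WalkFrom v v c' ∧ Y.WalkFrom u v q ∧
    Y.InSet sE q ∧ Y.InSet sE c ∧ Y.InSet sE c' ∧
    Y.Homotopic sE sF u u c (q ++ c' ++ Y.revW q)

/-- `c` is a shortest representative of its free homotopy class. -/
def ShortestRep (sE : Set Y.E) (sF : Set Y.F) (c : List Y.D) : Prop :=
  ∀ c', Y.FreelyHomotopic sE sF c c' → c.length ≤ c'.length

end Complex

/-- `s` occurs as a contiguous subword of the cyclic word `c`. -/
def cycContains {α : Type*} (c s : List α) : Prop :=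
  s ≠ [] ∧ s.length ≤ c.length ∧ s <:+: (c ++ c)

namespace Complex

variable {g : ℕ} (Y : Complex g)

/-- The cycle `c` contains no long block and no long chain. -/
def NoLongBlockOrChainCyc (c : List Y.D) : Prop :=
  (∀ s, cycContains c s → ¬ (Y.IsBlock s ∧ 2 * g + 1 ≤ s.length)) ∧
  (∀ bs, Y.IsLongChain bs → ¬ cycContains c bs.flatten)

/-- A (cyclically) non-backtracking cycle. -/
def NonBacktrackingCyc (c : List Y.D) : Prop :=
  ¬ ∃ d : Y.D, cycContains c [d, Y.dRev d]

/-- A cycle which is essential and a shortest representative of its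
free homotopy class. -/
def GoodCycle (c : List Y.D) : Prop :=
  Y.IsCycle c ∧ Y.Essential Set.univ Set.univ c ∧ Y.ShortestRep Set.univ Set.univ c

/-! ### Cells and components of complements -/

/-- The cells of a complex. -/
def Cell := Y.V ⊕ Y.E ⊕ Y.F

def vCell (v : Y.V) : Y.Cell := Sum.inl v
def eCell (e : Y.E) : Y.Cell := Sum.inr (Sum.inl e)
def fCell (f : Y.F) : Y.Cell := Sum.inr (Sum.inr f)

/-- Basic incidence of (open) cells. -/
def inc0 : Y.Cell → Y.Cell → Prop := fun c c' =>
  match c, c' with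
  | Sum.inl v, Sum.inr (Sum.inl e) => Y.src e = v ∨ Y.dst e = v
  | Sum.inl v, Sum.inr (Sum.inr f) => ∃ d ∈ Y.bdry f, Y.dTail d = v
  | Sum.inr (Sum.inl e), Sum.inr (Sum.inr f) => ∃ b, (e, b) ∈ Y.bdry f
  | _, _ => False

/-- Symmetrized incidence of cells. -/
def incid (c c' : Y.Cell) : Prop := Y.inc0 c c' ∨ Y.inc0 c' c

end Complex

/-- A triple of subsets of the cells of a complex `Y` (a prospective subcomplex). -/
structure SubC {g : ℕ} (Y : Complex g) where
  sV : Set Y.V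
  sE : Set Y.E
  sF : Set Y.F

namespace SubC

variable {g : ℕ} {Y : Complex g}

/-- `S` is an actual subcomplex: closed under taking boundaries of cells. -/
def IsSub (S : SubC Y) : Prop :=
  (∀ e ∈ S.sE, Y.src e ∈ S.sV ∧ Y.dst e ∈ S.sV) ∧
  (∀ f ∈ S.sF, ∀ d ∈ Y.bdry f, d.1 ∈ S.sE)

/-- Containment of subcomplexes. -/
def le (S T : SubC Y) : Prop := S.sV ⊆ T.sV ∧ S.sE ⊆ T.sE ∧ S.sF ⊆ T.sF

/-- Compactness: finitely many cells. -/
def Compact (S : SubC Y) : Prop := S.sV.Finite ∧ S.sE.Finite ∧ S.sF.Finite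

/-- Connectivity of the subcomplex. -/
def Connected (S : SubC Y) : Prop :=
  S.sV.Nonempty ∧ ∀ v ∈ S.sV, ∀ w ∈ S.sV, ∃ l, Y.WalkFrom v w l ∧ Y.InSet S.sE l

/-- Image of a subcomplex under a morphism. -/
def image {Z : Complex g} (φ : Hom Y Z) (S : SubC Y) : SubC Z :=
  ⟨φ.mV '' S.sV, φ.mE '' S.sE, φ.mF '' S.sF⟩

end SubC

/-- The whole complex, as a subcomplex of itself. -/
def fullSub {g : ℕ} (Y : Complex g) : SubC Y := ⟨Set.univ, Set.univ, Set.univ⟩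

namespace Complex

variable {g : ℕ} (Y : Complex g)

/-- Membership of a cell in a subcomplex. -/
def inSub (S : SubC Y) : Y.Cell → Prop := fun c =>
  match c with
  | Sum.inl v => v ∈ S.sV
  | Sum.inr (Sum.inl e) => e ∈ S.sE
  | Sum.inr (Sum.inr f) => f ∈ S.sF

/-- Reachability of cells through the open complement of the subcomplex `S`
(= lying in the same connected component of the complement). -/
def reachS (S : SubC Y) (c c' : Y.Cell) : Prop :=
  Relation.ReflTransGen (fun a b => Y.incid a b ∧ ¬ Y.inSub S a ∧ ¬ Y.inSub S b) c c'

end Complex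

/-- The closure (as a subcomplex) of the connected component of the cell `c₀` in the
complement of the subcomplex `S`. -/
def compCl {g : ℕ} (Y : Complex g) (S : SubC Y) (c₀ : Y.Cell) : SubC Y :=
  let cF : Set Y.F := {f | Y.reachS S c₀ (Y.fCell f)}
  let cE : Set Y.E :=
    {e | Y.reachS S c₀ (Y.eCell e)} ∪ {e | ∃ f ∈ cF, ∃ b, (e, b) ∈ Y.bdry f}
  let cV : Set Y.V :=
    {v | Y.reachS S c₀ (Y.vCell v)} ∪ {v | ∃ e ∈ cE, Y.src e = v ∨ Y.dst e = v}
  ⟨cV, cE, cF⟩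

/-- The subcomplex has exactly one boundary cycle (which covers all boundary darts). -/
def OneBdry {g : ℕ} (Y : Complex g) (S : SubC Y) : Prop :=
  ∃ δ, Y.BCycle S.sE S.sF δ ∧ ∀ d, Y.IsBDart S.sE S.sF d → d ∈ δ

/-- The subcomplex has exactly two (disjoint) boundary cycles, covering all
boundary darts. -/
def TwoBdry {g : ℕ} (Y : Complex g) (S : SubC Y) : Prop :=
  ∃ δ₁ δ₂, Y.BCycle S.sE S.sF δ₁ ∧ Y.BCycle S.sE S.sF δ₂ ∧ δ₁.Disjoint δ₂ ∧
    ∀ d, Y.IsBDart S.sE S.sF d → d ∈ δ₁ ∨ d ∈ δ₂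

/-- The boundary-reduced closure of `S` inside `Y`: the intersection of all
intermediate boundary reduced subcomplexes. -/
def BRcl {g : ℕ} (Y : Complex g) (S : SubC Y) : SubC Y where
  sV := ⋂ T ∈ {T : SubC Y | T.IsSub ∧ S.le T ∧ Y.BoundaryReduced T.sE T.sF}, T.sV
  sE := ⋂ T ∈ {T : SubC Y | T.IsSub ∧ S.le T ∧ Y.BoundaryReduced T.sE T.sF}, T.sE
  sF := ⋂ T ∈ {T : SubC Y | T.IsSub ∧ S.le T ∧ Y.BoundaryReduced T.sE T.sF}, T.sF

/-- The strongly-boundary-reduced closure of `S` inside `Y`. -/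
def SBRcl {g : ℕ} (Y : Complex g) (S : SubC Y) : SubC Y where
  sV := ⋂ T ∈ {T : SubC Y | T.IsSub ∧ S.le T ∧ Y.StronglyBoundaryReduced T.sE T.sF}, T.sV
  sE := ⋂ T ∈ {T : SubC Y | T.IsSub ∧ S.le T ∧ Y.StronglyBoundaryReduced T.sE T.sF}, T.sE
  sF := ⋂ T ∈ {T : SubC Y | T.IsSub ∧ S.le T ∧ Y.StronglyBoundaryReduced T.sE T.sF}, T.sF

/-- An isomorphism between the subcomplex `S` of `Y` and the subcomplex `T` of `Z`. -/
structure SubEquiv {g : ℕ} (Y : Complex g) (S : SubC Y) (Z : Complex g) (T : SubC Z) where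
  fV : Y.V → Z.V
  fE : Y.E → Z.E
  fF : Y.F → Z.F
  bijV : Set.BijOn fV S.sV T.sV
  bijE : Set.BijOn fE S.sE T.sE
  bijF : Set.BijOn fF S.sF T.sF
  hsrc : ∀ e ∈ S.sE, Z.src (fE e) = fV (Y.src e)
  hdst : ∀ e ∈ S.sE, Z.dst (fE e) = fV (Y.dst e)
  hlab : ∀ e ∈ S.sE, Z.lab (fE e) = Y.lab e
  hbdry : ∀ f ∈ S.sF, Z.bdry (fF f) = (Y.bdry f).map fun d => (fE d.1, d.2)

/-- `FunnelComponent Y S c₀`: the connected component of the cell `c₀` in the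
complement of the subcomplex `S` is a twice-punctured sphere with one funnel and
one fake-puncture.  Rendered combinatorially: the component contains infinitely
many `4g`-gons (the funnel); there is a boundary cycle `δ` of `S` adjacent to the
component, it is unique (one fake-puncture), and every closed walk inside the
closure of the component is freely homotopic there to a power of `δ` or of its
inverse (so the closure is a half-open annulus bounded by `δ`). -/
def FunnelComponent {g : ℕ} (Y : Complex g) (S : SubC Y) (c₀ : Y.Cell) : Prop :=
  {f : Y.F | Y.reachS S c₀ (Y.fCell f)}.Infinite ∧
  ∃ δ : List Y.D, Y.BCycle S.sE S.sF δ ∧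
    (∃ d ∈ δ, ∃ c', Y.incid (Y.eCell d.1) c' ∧ Y.reachS S c₀ c') ∧
    (∀ δ', Y.BCycle S.sE S.sF δ' →
      (∃ d ∈ δ', ∃ c', Y.incid (Y.eCell d.1) c' ∧ Y.reachS S c₀ c') →
      ∃ n, δ' = δ.rotate n) ∧
    (∀ (v : Y.V) (l : List Y.D), Y.WalkFrom v v l →
      Y.InSet ({e | Y.reachS S c₀ (Y.eCell e)} ∪ {e | ∃ b, (e, b) ∈ δ}) l →
      ∃ n,
        Y.FreelyHomotopic ({e | Y.reachS S c₀ (Y.eCell e)} ∪ {e | ∃ b, (e, b) ∈ δ})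
          {f | Y.reachS S c₀ (Y.fCell f)} l ((List.replicate n δ).flatten) ∨
        Y.FreelyHomotopic ({e | Y.reachS S c₀ (Y.eCell e)} ∪ {e | ∃ b, (e, b) ∈ δ})
          {f | Y.reachS S c₀ (Y.fCell f)} l ((List.replicate n (Y.revW δ)).flatten))

/-- `Y` contains a funnel: an essential cycle `δ` of `Y` cutting off an infinite
region of `Y` which is attached to the rest of `Y` only along `δ`, contains no
boundary of `Y`, and is a half-open annulus (every loop inside is freely homotopic
to a power of `δ`); i.e. an end of `Y` which is a puncture of the ambient covering. -/
def HasFunnel {g : ℕ} (Y : Complex g) : Prop :=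
  ∃ (δ : List Y.D) (sE : Set Y.E) (sF : Set Y.F),
    Y.IsCycle δ ∧ Y.Essential Set.univ Set.univ δ ∧
    (∀ d ∈ δ, d.1 ∉ sE) ∧ sE.Nonempty ∧ sF.Infinite ∧
    (∀ f ∈ sF, ∀ d ∈ Y.bdry f, d.1 ∈ sE ∨ ∃ b, (d.1, b) ∈ δ) ∧
    (∀ f : Y.F, (∃ d ∈ Y.bdry f, d.1 ∈ sE) → f ∈ sF) ∧
    (∀ d : Y.D, d.1 ∈ sE → ¬ Y.IsBDart Set.univ Set.univ d) ∧
    (∀ v : Y.V, (∃ e ∈ sE, Y.src e = v ∨ Y.dst e = v) → (∀ d ∈ δ, Y.dTail d ≠ v) →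
      ∀ e' : Y.E, (Y.src e' = v ∨ Y.dst e' = v) → e' ∈ sE) ∧
    (∀ (v : Y.V) (l : List Y.D), Y.WalkFrom v v l →
      Y.InSet (sE ∪ {e | ∃ b, (e, b) ∈ δ}) l →
      ∃ n,
        Y.FreelyHomotopic (sE ∪ {e | ∃ b, (e, b) ∈ δ}) sF l
          ((List.replicate n δ).flatten) ∨
        Y.FreelyHomotopic (sE ∪ {e | ∃ b, (e, b) ∈ δ}) sF l
          ((List.replicate n (Y.revW δ)).flatten))

/-- The fundamental group of `Y` is cyclic: some closed walk `c` generates all free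
homotopy classes of loops.  (For a connected surface this is *equivalent to NOT
having genus ≥ 1 or at least 3 boundary components/punctures*.) -/
def CyclicPi1 {g : ℕ} (Y : Complex g) : Prop :=
  ∃ c : List Y.D, ∀ (v : Y.V) (l : List Y.D), Y.WalkFrom v v l →
    ∃ n,
      Y.FreelyHomotopic Set.univ Set.univ l ((List.replicate n c).flatten) ∨
      Y.FreelyHomotopic Set.univ Set.univ l ((List.replicate n (Y.revW c)).flatten)

/-! ### The covering space `J\~Σ_g` and the core surface of `J` -/

/-- Right cosets `Jx` of `J` in `Γ_g` — the vertices (and faces) of `J\~Σ_g`. -/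
abbrev Cos (g : ℕ) (J : Subgroup (Gamma g)) := Quotient (QuotientGroup.rightRel J)

/-- The coset `Jx`. -/
def mkCos (g : ℕ) (J : Subgroup (Gamma g)) (x : Gamma g) : Cos g J :=
  Quotient.mk _ x

/-- Right multiplication on right cosets. -/
def rmul (g : ℕ) (J : Subgroup (Gamma g)) (x : Gamma g) : Cos g J → Cos g J :=
  Quotient.map (· * x) (by
    intro a b hab
    have h1 : b * a⁻¹ ∈ J := QuotientGroup.rightRel_apply.mp hab
    refine QuotientGroup.rightRel_apply.mpr ?_
    have h2 : b * x * (a * x)⁻¹ = b * a⁻¹ := by group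
    rw [h2]; exact h1)

/-- The walk in `J\~Σ_g` starting at a vertex and reading a given word. -/
def relWalk (g : ℕ) (J : Subgroup (Gamma g)) :
    Cos g J → List (Letter g) → List ((Cos g J × Fin (2 * g)) × Bool)
  | _, [] => []
  | v, (ℓ, true) :: w =>
      ((v, ℓ), true) :: relWalk g J (rmul g J (PresentedGroup.of ℓ) v) w
  | v, (ℓ, false) :: w =>
      ((rmul g J (PresentedGroup.of ℓ)⁻¹ v, ℓ), false) ::
        relWalk g J (rmul g J (PresentedGroup.of ℓ)⁻¹ v) w

/-- The covering space `Υ = J\~Σ_g` of `Σ_g` corresponding to the subgroup `J`,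
with the CW-structure pulled back from `Σ_g`: vertices and `4g`-gons are the right
cosets of `J`, and each vertex carries one outgoing edge per label. -/
def cover (g : ℕ) (J : Subgroup (Gamma g)) : Complex g where
  V := Cos g J
  E := Cos g J × Fin (2 * g)
  F := Cos g J
  src e := e.1
  dst e := rmul g J (PresentedGroup.of e.2) e.1
  lab e := e.2
  bdry v := relWalk g J v (relatorWord g)

/-- The map `J₁\~Σ_g → J₂\~Σ_g` on vertices, for `J₁ ≤ J₂`. -/
def coverMapV {g : ℕ} {J₁ J₂ : Subgroup (Gamma g)} (h : J₁ ≤ J₂) :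
    Cos g J₁ → Cos g J₂ :=
  Quotient.map id (by
    intro a b hab
    have h1 : b * a⁻¹ ∈ J₁ := QuotientGroup.rightRel_apply.mp hab
    exact QuotientGroup.rightRel_apply.mpr (h h1))

/-- The natural covering morphism on edges. -/
def coverMapE {g : ℕ} {J₁ J₂ : Subgroup (Gamma g)} (h : J₁ ≤ J₂)
    (e : (cover g J₁).E) : (cover g J₂).E :=
  (coverMapV h e.1, e.2)

/-- The natural covering morphism on darts. -/
def coverMapD {g : ℕ} {J₁ J₂ : Subgroup (Gamma g)} (h : J₁ ≤ J₂)
    (d : (cover g J₁).D) : (cover g J₂).D :=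
  (coverMapE h d.1, d.2)

/-- The cycle `c` in `J\~Σ_g` represents the conjugacy class of `γ` in `J`
(conjugacy classes in `J` ↔ free homotopy classes of essential loops in `J\~Σ_g`). -/
def RepCls {g : ℕ} (J : Subgroup (Gamma g)) (c : List ((cover g J).D))
    (γ : Gamma g) : Prop :=
  ∃ x j : Gamma g, j ∈ J ∧
    (cover g J).WalkFrom (mkCos g J x) (mkCos g J x) c ∧
    x * wordG ((cover g J).wordOf c) * x⁻¹ = j * γ * j⁻¹

/-- Step (i) of the definition of the core surface: the edges lying on some
shortest representative cycle of an essential free homotopy class. -/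
def coreE1 (g : ℕ) (J : Subgroup (Gamma g)) : Set (cover g J).E :=
  {e | ∃ c, (cover g J).GoodCycle c ∧ ∃ b, (e, b) ∈ c}

/-- The vertices of step (i) of the definition of the core surface. -/
def coreV1 (g : ℕ) (J : Subgroup (Gamma g)) : Set (cover g J).V :=
  {v | ∃ e ∈ coreE1 g J, (cover g J).src e = v ∨ (cover g J).dst e = v}

/-- Step (i) of the definition of the core surface, as a subcomplex of `J\~Σ_g`. -/
def coreS1 (g : ℕ) (J : Subgroup (Gamma g)) : SubC (cover g J) :=
  ⟨coreV1 g J, coreE1 g J, ∅⟩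

/-- A cell of `J\~Σ_g` lying in a connected component of the complement of step (i)
which contains only finitely many `4g`-gons. -/
def coreFin (g : ℕ) (J : Subgroup (Gamma g)) (c : (cover g J).Cell) : Prop :=
  ¬ (cover g J).inSub (coreS1 g J) c ∧
  {f : (cover g J).F | (cover g J).reachS (coreS1 g J) c ((cover g J).fCell f)}.Finite

open Classical in
/-- The core surface `Core(J)` of a subgroup `J ≤ Γ_g`, as a subcomplex of
`Υ = J\~Σ_g`: (i) the union of all shortest representative cycles of essential
free homotopy classes in `Υ`, together with (ii) all connected components of the
complement containing finitely many `4g`-gons.  For the trivial subgroup it is a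
single vertex. -/
def coreSub (g : ℕ) (J : Subgroup (Gamma g)) : SubC (cover g J) :=
  if J = ⊥ then ⟨{mkCos g J 1}, ∅, ∅⟩
  else
    ⟨coreV1 g J ∪ {v | coreFin g J ((cover g J).vCell v)},
     coreE1 g J ∪ {e | coreFin g J ((cover g J).eCell e)},
     {f | coreFin g J ((cover g J).fCell f)}⟩

/-!
A minimal long block and a long chain are both instances of a reducible chain: consecutive blocks
of length `2g - 1`, with one extra dart in the first and one in the last block. Every block of a
reducible chain in the boundary reduced surface `Z` runs along a face. Indeed, if `Z` has an edge
in the half-edge between two consecutive blocks, then lengthening these two blocks by that edge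
splits the chain into two shorter reducible chains. If there is no such edge, a block running along
a face has no neighbours, hence is the whole chain; and if no block runs along a face, then the
chain lies on the boundary of `Z`, which is impossible.

Now let a reducible chain run along the boundary of a compact subcomplex `T`, and attach to `T`
all faces along its blocks. At least `2g - 1` darts of each of these faces were on the boundary of
`T`, even `2g` for the first block. Together with the edges shared with the neighbouring new
faces, these account for `2g + 1` of the `4g` darts of the face, so at most `2g - 1` new boundary
darts replace them and the boundary gets strictly shorter. Hence a compact subcomplex containing
`S` with the least possible number of boundary darts is boundary reduced, and it contains
`BR(S ↪ Z)`.
-/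

/-! ### The cyclic order of half-edges and the relator -/

section Letters

variable {g : ℕ} {s s' t t' x : Letter g}

/-- The inverse letter. -/
def flipLetter (s : Letter g) : Letter g := (s.1, !s.2)

theorem posLv_lt (s : Letter g) : posLv s < 4 * g := by
  have := s.1.2
  unfold posLv posOut posIn
  split_ifs <;> omega

theorem posLv_flipLetter (s : Letter g) : posLv (flipLetter s) = posArr s := by
  obtain ⟨ℓ, b⟩ := s
  cases b <;> rfl

theorem posArr_flipLetter (s : Letter g) : posArr (flipLetter s) = posLv s := by
  obtain ⟨ℓ, b⟩ := s
  cases b <;> rfl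

theorem posArr_lt (s : Letter g) : posArr s < 4 * g :=
  posLv_flipLetter s ▸ posLv_lt _

theorem posLv_injective : Function.Injective (posLv (g := g)) := by
  rintro ⟨⟨a, ha⟩, b⟩ ⟨⟨c, hc⟩, d⟩ h
  cases b <;> cases d <;>
    simp only [posLv, posOut, posIn, Bool.false_eq_true, if_true, if_false, Prod.mk.injEq,
      Fin.mk.injEq] at h ⊢ <;>
    grind

theorem posArr_injective : Function.Injective (posArr (g := g)) := by
  rintro ⟨a, b⟩ ⟨c, d⟩ h
  rw [← posLv_flipLetter, ← posLv_flipLetter] at h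
  simpa [flipLetter] using posLv_injective h

theorem gapN_eq_iff {k : ℕ} (hk : k < 4 * g) :
    gapN s t = k ↔ posArr s + 1 + k ≡ posLv t [MOD 4 * g] := by
  have hs := posArr_lt s
  have hdiff : posArr s + 1 + (posLv t + 4 * g - (posArr s + 1)) = posLv t + 4 * g := by omega
  have hmod : posArr s + 1 + gapN s t ≡ posLv t [MOD 4 * g] := by
    have h := (Nat.mod_modEq (posLv t + 4 * g - (posArr s + 1)) (4 * g)).add_left (posArr s + 1)
    rw [hdiff] at h
    exact h.trans (Nat.add_modEq_right)
  refine ⟨fun h => h ▸ hmod, fun h => ?_⟩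
  exact ((hmod.trans h.symm).add_left_cancel').eq_of_lt_of_lt (Nat.mod_lt _ (by omega)) hk

theorem gapN_eq_zero_iff : gapN s t = 0 ↔ posArr s + 1 ≡ posLv t [MOD 4 * g] :=
  gapN_eq_iff (by have := posLv_lt s; omega)

theorem gapN_eq_one_iff : gapN s t = 1 ↔ posArr s + 2 ≡ posLv t [MOD 4 * g] :=
  gapN_eq_iff (by have := posLv_lt s; omega)

theorem eq_of_gapN_eq_zero_right (h : gapN s t = 0) (h' : gapN s t' = 0) : t = t' := by
  rw [gapN_eq_zero_iff] at h h'
  exact posLv_injective ((h.symm.trans h').eq_of_lt_of_lt (posLv_lt t) (posLv_lt t'))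

theorem eq_of_gapN_eq_zero_left (h : gapN s t = 0) (h' : gapN s' t = 0) : s = s' := by
  rw [gapN_eq_zero_iff] at h h'
  exact posArr_injective
    ((h.trans h'.symm).add_right_cancel'.eq_of_lt_of_lt (posArr_lt s) (posArr_lt s'))

theorem gapN_flipLetter_left (h : gapN s x = 0) (h' : gapN s t = 1) :
    gapN (flipLetter x) t = 0 := by
  rw [gapN_eq_zero_iff] at h ⊢
  rw [gapN_eq_one_iff] at h'
  rw [posArr_flipLetter]
  exact (h.symm.add_right 1).trans h'

theorem gapN_flipLetter_right (h : gapN x t = 0) (h' : gapN s t = 1) :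
    gapN s (flipLetter x) = 0 := by
  rw [gapN_eq_zero_iff] at h ⊢
  rw [gapN_eq_one_iff] at h'
  rw [posLv_flipLetter]
  exact Nat.ModEq.add_right_cancel' 1 (h'.trans h.symm)

/-- The position at which a letter occurs in the relator `[a₁,b₁]⋯[a_g,b_g]`. -/
def relIdx (s : Letter g) : ℕ := 4 * (s.1 / 2) + s.1 % 2 + if s.2 then 0 else 2

theorem relIdx_lt (s : Letter g) : relIdx s < 4 * g := by
  have := s.1.2
  unfold relIdx
  split_ifs <;> omega

theorem modEq_succ_iff {n a b : ℕ} (ha : a < n) (hb : b < n) :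
    a + 1 ≡ b [MOD n] ↔ b = a + 1 ∨ b = 0 ∧ a + 1 = n := by
  rw [Nat.ModEq, Nat.mod_eq_of_lt hb]
  obtain h | h := (Nat.succ_le_of_lt ha).lt_or_eq
  · rw [Nat.mod_eq_of_lt h]; omega
  · rw [show a + 1 = n from h, Nat.mod_self]; omega

theorem gapN_eq_zero_iff_relIdx :
    gapN s t = 0 ↔ relIdx s + 1 ≡ relIdx t [MOD 4 * g] := by
  rw [gapN_eq_zero_iff, modEq_succ_iff (posArr_lt s) (posLv_lt t),
    modEq_succ_iff (relIdx_lt s) (relIdx_lt t)]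
  obtain ⟨⟨a, ha⟩, b⟩ := s
  obtain ⟨⟨c, hc⟩, d⟩ := t
  cases b <;> cases d <;>
    simp only [posLv, posArr, posOut, posIn, relIdx, Bool.false_eq_true, if_true, if_false] <;>
    grind

theorem length_relatorWord (g : ℕ) : (relatorWord g).length = 4 * g := by
  simp [relatorWord]

theorem relIdx_getElem_relatorWord {i : ℕ} (hi : i < (relatorWord g).length) :
    relIdx (relatorWord g)[i] = i := by
  simp only [relatorWord, List.getElem_map, List.getElem_finRange, relIdx, relLabel, relSign,
    Fin.val_cast, decide_eq_true_eq]
  split_ifs <;> omega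

end Letters

/-! ### Darts and faces -/

section Lists

variable {α : Type*} {R : α → α → Prop} {l : List α} {a : α}

theorem exists_pair_infix_append_self (ha : a ∈ l) : ∃ b ∈ l, [a, b] <:+: l ++ l := by
  obtain ⟨l₁, l₂, rfl⟩ := List.append_of_mem ha
  match l₁, l₂ with
  | l₁, b :: l₂ => exact ⟨b, by simp, l₁, l₂ ++ (l₁ ++ a :: b :: l₂), by simp⟩
  | b :: l₁, [] => exact ⟨b, by simp, b :: l₁, l₁ ++ [a], by simp⟩
  | [], [] => exact ⟨a, by simp, List.infix_rfl⟩

theorem exists_pair_infix_append_self' (ha : a ∈ l) : ∃ b ∈ l, [b, a] <:+: l ++ l := by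
  obtain ⟨b, hb, h⟩ := exists_pair_infix_append_self (List.mem_reverse.2 ha)
  exact ⟨b, List.mem_reverse.1 hb, List.reverse_infix.1 (by simpa using h)⟩

theorem mem_iff_of_isChain {s : Set α} {b : α} (hl : l.IsChain R)
    (hs : ∀ x y, R x y → (x ∈ s ↔ y ∈ s)) (ha : a ∈ l) (hb : b ∈ l) : a ∈ s ↔ b ∈ s := by
  have : Std.Symm fun x y => x ∈ s ↔ y ∈ s := ⟨fun _ _ => Iff.symm⟩
  have : IsTrans α fun x y => x ∈ s ↔ y ∈ s := ⟨fun _ _ _ => Iff.trans⟩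
  have hpair : l.Pairwise fun x y => x ∈ s ↔ y ∈ s :=
    List.isChain_iff_pairwise.1 (hl.imp fun {x y} => hs x y)
  exact hpair.forall_of_forall (R := fun x y => x ∈ s ↔ y ∈ s) (fun _ _ => Iff.rfl) ha hb

theorem ncard_setOf_mem (hl : l.Nodup) : {x | x ∈ l}.ncard = l.length := by
  classical
  rw [← List.coe_toFinset, Set.ncard_coe_finset, List.toFinset_card_of_nodup hl]

end Lists

namespace Complex

variable {g : ℕ} {Z : Complex g} {d d' x y : Z.D} {f f' : Z.F}

theorem dRev_dRev (d : Z.D) : Z.dRev (Z.dRev d) = d := by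
  simp [dRev]

theorem dTail_dRev (d : Z.D) : Z.dTail (Z.dRev d) = Z.dHead d := by
  obtain ⟨e, b⟩ := d
  cases b <;> rfl

theorem dHead_dRev (d : Z.D) : Z.dHead (Z.dRev d) = Z.dTail d := by
  rw [← dTail_dRev, dRev_dRev]

theorem dLet_dRev (d : Z.D) : Z.dLet (Z.dRev d) = flipLetter (Z.dLet d) := rfl

theorem P1.eq_of_dTail_eq (h1 : Z.P1) (ht : Z.dTail x = Z.dTail y)
    (hl : Z.dLet x = Z.dLet y) : x = y := by
  obtain ⟨e, b⟩ := x
  obtain ⟨e', b'⟩ := y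
  obtain ⟨hlab, rfl⟩ := Prod.mk.inj hl
  cases b
  · rw [h1.2 e e' ht hlab]
  · rw [h1.1 e e' ht hlab]

theorem P1.eq_of_dHead_eq (h1 : Z.P1) (hh : Z.dHead x = Z.dHead y)
    (hl : Z.dLet x = Z.dLet y) : x = y := by
  rw [← dRev_dRev x, h1.eq_of_dTail_eq (x := Z.dRev x) (y := Z.dRev y) (by simpa only [dTail_dRev])
    (by rw [dLet_dRev, dLet_dRev, hl]), dRev_dRev]

/-- The dart `d'` leaves the head of `d`, with exactly `k` half-edges of the ambient cyclic order
between them: `k = 0` inside a block, and `k = 1` between consecutive blocks of a chain. -/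
def GapStep (Z : Complex g) (k : ℕ) (d d' : Z.D) : Prop :=
  Z.adj d d' ∧ gapN (Z.dLet d) (Z.dLet d') = k

theorem P1.gapStep_right_unique (h1 : Z.P1) (hx : Z.GapStep 0 d x) (hy : Z.GapStep 0 d y) :
    x = y :=
  h1.eq_of_dTail_eq (hx.1.symm.trans hy.1) (eq_of_gapN_eq_zero_right hx.2 hy.2)

theorem P1.gapStep_left_unique (h1 : Z.P1) (hx : Z.GapStep 0 x d) (hy : Z.GapStep 0 y d) :
    x = y :=
  h1.eq_of_dHead_eq (hx.1.trans hy.1.symm) (eq_of_gapN_eq_zero_left hx.2 hy.2)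

theorem GapStep.dRev_left (hx : Z.GapStep 0 d x) (h : Z.GapStep 1 d d') :
    Z.GapStep 0 (Z.dRev x) d' :=
  ⟨(dHead_dRev x).trans (hx.1.symm.trans h.1), gapN_flipLetter_left hx.2 h.2⟩

theorem GapStep.dRev_right (hx : Z.GapStep 0 x d') (h : Z.GapStep 1 d d') :
    Z.GapStep 0 d (Z.dRev x) :=
  ⟨h.1.trans (hx.1.symm.trans (dTail_dRev x).symm), gapN_flipLetter_right hx.2 h.2⟩

theorem walkFrom_nil_iff {u v : Z.V} : Z.WalkFrom u v [] ↔ u = v := by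
  refine ⟨fun h => ?_, fun h => h ▸ .nil u⟩
  cases h
  rfl

theorem walkFrom_cons_iff {u v : Z.V} {l : List Z.D} :
    Z.WalkFrom u v (d :: l) ↔ Z.dTail d = u ∧ Z.WalkFrom (Z.dHead d) v l := by
  refine ⟨fun h => ?_, fun ⟨hu, h⟩ => hu ▸ .cons d h⟩
  cases h with
  | cons _ h => exact ⟨rfl, h⟩

theorem WalkFrom.isChain_adj {u v : Z.V} {l : List Z.D} (h : Z.WalkFrom u v l) :
    l.IsChain Z.adj := by
  induction h with
  | nil => exact .nil
  | @cons d v l h ih =>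
    cases l with
    | nil => exact .singleton d
    | cons d' l => exact .cons_cons (walkFrom_cons_iff.1 h).1.symm ih

theorem WalkFrom.append {u v w : Z.V} {l l' : List Z.D} (h : Z.WalkFrom u v l)
    (h' : Z.WalkFrom v w l') : Z.WalkFrom u w (l ++ l') := by
  induction h with
  | nil => exact h'
  | cons d _ ih => exact .cons d (ih h')

theorem P3.length_bdry (h3 : Z.P3) (f : Z.F) : (Z.bdry f).length = 4 * g := by
  rw [← length_relatorWord g, ← (h3.1 f).2, wordOf, List.length_map]

theorem P3.relIdx_getElem_bdry (h3 : Z.P3) {i : ℕ} (hi : i < (Z.bdry f).length) :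
    relIdx (Z.dLet (Z.bdry f)[i]) = i := by
  have hword := (h3.1 f).2
  rw [wordOf] at hword
  rw [← List.getElem_map Z.dLet (h := by simpa using hi)]
  simp only [hword, relIdx_getElem_relatorWord]

theorem P3.nodup_bdry (h3 : Z.P3) (f : Z.F) : (Z.bdry f).Nodup := by
  rw [List.nodup_iff_injective_get]
  intro i j hij
  rw [Fin.ext_iff, ← h3.relIdx_getElem_bdry i.2, ← h3.relIdx_getElem_bdry j.2]
  exact congrArg (fun d => relIdx (Z.dLet d)) hij

theorem P3.isChain_bdry_append_self (h3 : Z.P3) (f : Z.F) :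
    (Z.bdry f ++ Z.bdry f).IsChain (Z.GapStep 0) := by
  have hidx : ∀ i (hi : i < (Z.bdry f ++ Z.bdry f).length),
      relIdx (Z.dLet (Z.bdry f ++ Z.bdry f)[i]) ≡ i [MOD 4 * g] := by
    intro i hi
    rw [List.getElem_append]
    split_ifs
    · rw [h3.relIdx_getElem_bdry]
    · rw [h3.relIdx_getElem_bdry, h3.length_bdry]
      have := Nat.add_modEq_right (n := 4 * g) (a := i - 4 * g)
      rw [Nat.sub_add_cancel (by grind [h3.length_bdry f])] at this
      exact this.symm
  obtain ⟨v, hv⟩ := (h3.1 f).1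
  refine List.isChain_iff_getElem.2 fun i hi =>
    ⟨List.isChain_iff_getElem.1 (hv.append hv).isChain_adj i hi, gapN_eq_zero_iff_relIdx.2 ?_⟩
  exact ((hidx i (by omega)).add_right 1).trans (hidx (i + 1) hi).symm

theorem P3.gapStep_of_infix (h3 : Z.P3) (h : [d, d'] <:+: Z.bdry f ++ Z.bdry f) :
    Z.GapStep 0 d d' :=
  List.isChain_pair.1 ((h3.isChain_bdry_append_self f).infix h)

theorem P3.exists_gapStep_right (h3 : Z.P3) (hd : d ∈ Z.bdry f) :
    ∃ x ∈ Z.bdry f, Z.GapStep 0 d x :=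
  let ⟨x, hx, h⟩ := exists_pair_infix_append_self hd
  ⟨x, hx, h3.gapStep_of_infix h⟩

theorem P3.exists_gapStep_left (h3 : Z.P3) (hd : d ∈ Z.bdry f) :
    ∃ x ∈ Z.bdry f, Z.GapStep 0 x d :=
  let ⟨x, hx, h⟩ := exists_pair_infix_append_self' hd
  ⟨x, hx, h3.gapStep_of_infix h⟩

theorem mem_bdry_iff_of_gapStep (h1 : Z.P1) (h3 : Z.P3) (h : Z.GapStep 0 d d') :
    d ∈ Z.bdry f ↔ d' ∈ Z.bdry f := by
  constructor <;> intro hd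
  · obtain ⟨x, hx, hdx⟩ := h3.exists_gapStep_right hd
    exact h1.gapStep_right_unique hdx h ▸ hx
  · obtain ⟨x, hx, hxd⟩ := h3.exists_gapStep_left hd
    exact h1.gapStep_left_unique hxd h ▸ hx

theorem faceStep_iff (h1 : Z.P1) (h3 : Z.P3) {sF : Set Z.F} :
    Z.faceStep sF d d' ↔ Z.GapStep 0 d d' ∧ ∃ f ∈ sF, d ∈ Z.bdry f := by
  constructor
  · rintro ⟨f, hf, h⟩
    exact ⟨h3.gapStep_of_infix h, f, hf, by simpa using h.subset (List.mem_cons_self ..)⟩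
  · rintro ⟨h, f, hf, hd⟩
    obtain ⟨x, -, hx⟩ := exists_pair_infix_append_self hd
    exact ⟨f, hf, h1.gapStep_right_unique (h3.gapStep_of_infix hx) h ▸ hx⟩

theorem subset_bdry_of_isChain (h1 : Z.P1) (h3 : Z.P3) {l : List Z.D}
    (hl : l.IsChain (Z.GapStep 0)) (hd : d ∈ l) (hdf : d ∈ Z.bdry f) : l ⊆ Z.bdry f :=
  fun _ hx => (mem_iff_of_isChain (s := {d | d ∈ Z.bdry f}) hl
    (fun _ _ => mem_bdry_iff_of_gapStep h1 h3) hd hx).1 hdf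

theorem eq_of_mem_bdry (h1 : Z.P1) (h3 : Z.P3) (hf : d ∈ Z.bdry f) (hf' : d ∈ Z.bdry f') :
    f = f' := by
  have hsub : Z.bdry f ⊆ Z.bdry f' := subset_bdry_of_isChain h1 h3
    (List.isChain_append.1 (h3.isChain_bdry_append_self f)).1 hf hf'
  refine h3.2 (List.ext_getElem (by rw [h3.length_bdry, h3.length_bdry]) fun i hi _ => ?_)
  obtain ⟨j, hj, hij⟩ := List.mem_iff_getElem.1 (hsub (List.getElem_mem hi))
  obtain rfl : j = i := by
    rw [← h3.relIdx_getElem_bdry hj, hij, h3.relIdx_getElem_bdry]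
  exact hij.symm

/-! ### Reducible chains -/

variable {b b' : List Z.D} {bs l₁ l₂ : List (List Z.D)} {sE : Set Z.E} {sF : Set Z.F}

theorem pos_of_dart (d : Z.D) : 0 < g := by
  have := (Z.lab d.1).2
  omega

/-- A chain whose blocks have length `2g - 1`, except that the first and the last block are each
one dart longer. A single block is both, so it has length `2g + 1`; this definition treats long
chains and (minimal) long blocks uniformly. -/
def IsReducibleChain (Z : Complex g) (bs : List (List Z.D)) : Prop :=
  Z.IsChain bs ∧ ∀ i (hi : i < bs.length), bs[i].length + 1 =
    2 * g + (if i = 0 then 1 else 0) + if i + 1 = bs.length then 1 else 0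

theorem IsReducibleChain.length_add_one (hbs : Z.IsReducibleChain (l₁ ++ b :: l₂)) :
    b.length + 1 = 2 * g + (if l₁ = [] then 1 else 0) + if l₂ = [] then 1 else 0 := by
  have := hbs.2 l₁.length (by simp)
  simpa [List.length_eq_zero_iff] using this

theorem IsReducibleChain.ne_nil (hbs : Z.IsReducibleChain bs) (hb : b ∈ bs) : b ≠ [] :=
  (hbs.1.2.1 b hb).1

theorem isReducibleChain_singleton_iff :
    Z.IsReducibleChain [b] ↔ Z.IsBlock b ∧ b.length = 2 * g + 1 :=
  ⟨fun h => ⟨h.1.2.1 b (by simp), by simpa using h.2 0⟩,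
    fun h => ⟨⟨by simp, by simpa using h.1, .singleton b⟩, by simpa using h.2⟩⟩

theorem IsLongChain.isReducibleChain (hbs : Z.IsLongChain bs) : Z.IsReducibleChain bs := by
  obtain ⟨hchain, k, hk⟩ := hbs
  have hlen : bs.length = k + 2 := by simpa using congrArg List.length hk
  refine ⟨hchain, fun i hi => ?_⟩
  have hi' : (bs.map List.length)[i]? = some bs[i].length := by simp [hi]
  obtain ⟨d, -⟩ := List.exists_mem_of_ne_nil _ (hchain.2.1 _ (List.getElem_mem hi)).1
  have := pos_of_dart d
  rw [hk] at hi'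
  grind

theorem IsReducibleChain.isLongChain (hbs : Z.IsReducibleChain bs) (h : 2 ≤ bs.length) :
    Z.IsLongChain bs := by
  refine ⟨hbs.1, bs.length - 2, List.ext_getElem (by grind) fun i hi _ => ?_⟩
  have := hbs.2 i (by simpa using hi)
  grind

theorem IsBlock.take (hb : Z.IsBlock b) {n : ℕ} (hn : 0 < n) : Z.IsBlock (b.take n) :=
  ⟨by simp [hb.1, hn.ne'], (List.length_take_le' ..).trans hb.2.1, hb.2.2.take n⟩

theorem BPath.take {l : List Z.D} (hl : Z.BPath sE sF l) {n : ℕ}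
    (hn : 0 < n) : Z.BPath sE sF (l.take n) :=
  ⟨by simp [hl.1, hn.ne'], fun d hd => hl.2.1 d (List.mem_of_mem_take hd), hl.2.2.take n⟩

theorem boundaryReduced_iff :
    Z.BoundaryReduced sE sF ↔ ∀ bs, Z.IsReducibleChain bs → ¬ Z.BPath sE sF bs.flatten := by
  constructor
  · intro hbr bs hbs hpath
    match bs with
    | [] => exact hbs.1.1 rfl
    | [b] =>
      obtain ⟨hb, hlen⟩ := isReducibleChain_singleton_iff.1 hbs
      exact hbr.1 b (by simpa using hpath) ⟨hb, hlen.ge⟩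
    | b :: b' :: bs => exact hbr.2 _ (hbs.isLongChain (by simp)) hpath
  · refine fun h => ⟨fun l hl ⟨hblock, hlen⟩ => ?_, fun bs hbs => h bs hbs.isReducibleChain⟩
    refine h [l.take (2 * g + 1)] (isReducibleChain_singleton_iff.2 ⟨hblock.take (by omega), ?_⟩)
      (by simpa using hl.take (by omega))
    exact List.length_take_of_le hlen

theorem IsBlock.concat (hb : Z.IsBlock b) (hlen : b.length < 4 * g) (hd : d ∈ b.getLast?)
    (hx : Z.GapStep 0 d x) : Z.IsBlock (b ++ [x]) := by
  refine ⟨by simp, by simpa using hlen, List.isChain_append.2 ⟨hb.2.2, .singleton x, ?_⟩⟩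
  rintro _ h _ ⟨⟩
  exact Option.mem_unique hd h ▸ hx

theorem IsBlock.cons (hb : Z.IsBlock b) (hlen : b.length < 4 * g) (hd : d ∈ b.head?)
    (hx : Z.GapStep 0 x d) : Z.IsBlock (x :: b) :=
  ⟨by simp, hlen, List.isChain_cons.2 ⟨fun _ h => Option.mem_unique hd h ▸ hx, hb.2.2⟩⟩

theorem IsReducibleChain.concat_left (hbs : Z.IsReducibleChain (l₁ ++ b :: b' :: l₂))
    (hd : d ∈ b.getLast?) (hx : Z.GapStep 0 d x) : Z.IsReducibleChain (l₁ ++ [b ++ [x]]) := by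
  have hg := pos_of_dart d
  have hlen := hbs.length_add_one
  obtain ⟨⟨-, hblock, hchain⟩, hlengths⟩ := hbs
  have hb := hblock b (by simp)
  obtain ⟨hchain₁, -, hstep⟩ := List.isChain_append.1 hchain
  refine ⟨⟨by simp, ?_, List.isChain_append.2 ⟨hchain₁, .singleton _, ?_⟩⟩, fun i hi => ?_⟩
  · have := hb.concat (by grind) hd hx
    simp only [List.mem_append, List.mem_singleton]
    rintro c (hc | rfl)
    exacts [hblock c (by simp [hc]), this]
  · rintro c hc _ ⟨⟩
    simpa [chainStep, List.head?_append_of_ne_nil _ hb.1] using hstep c hc b rfl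
  · have := hlengths i (by grind)
    grind

theorem IsReducibleChain.cons_right (hbs : Z.IsReducibleChain (l₁ ++ b :: b' :: l₂))
    (hd : d ∈ b'.head?) (hx : Z.GapStep 0 x d) : Z.IsReducibleChain ((x :: b') :: l₂) := by
  have hg := pos_of_dart d
  have hlen := IsReducibleChain.length_add_one (l₁ := l₁ ++ [b]) (b := b') (l₂ := l₂)
    (by simpa using hbs)
  obtain ⟨⟨-, hblock, hchain⟩, hlengths⟩ := hbs
  have hb := hblock b' (by simp)
  obtain ⟨hstep, hchain₂⟩ := List.isChain_cons.1 (List.isChain_append_cons_cons.1 hchain).2.2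
  refine ⟨⟨by simp, ?_, List.isChain_cons.2 ⟨?_, hchain₂⟩⟩, fun i hi => ?_⟩
  · have := hb.cons (by grind) hd hx
    simp only [List.mem_cons]
    rintro c (rfl | hc)
    exacts [this, hblock c (by simp [hc])]
  · intro c hc
    simpa [chainStep, List.getLast?_cons_of_ne_nil hb.1] using hstep c hc
  · match i with
    | 0 =>
      simp only [List.append_eq_nil_iff, List.cons_ne_nil, and_false, if_false] at hlen
      have : b'.length + 1 + 1 = 2 * g + 1 + if l₂ = [] then 1 else 0 := by omega
      simpa [List.length_eq_zero_iff] using this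
    | i + 1 =>
      have := hlengths (l₁.length + 2 + i) (by grind)
      clear hlen
      grind

/-- The half-edge separating some two consecutive blocks of `bs` is present in `Z`. -/
def HasOccupiedGap (Z : Complex g) (bs : List (List Z.D)) : Prop :=
  ∃ l₁ b b' l₂, bs = l₁ ++ b :: b' :: l₂ ∧ ∃ d ∈ b.getLast?, ∃ x, Z.GapStep 0 d x

theorem IsChain.bPath_univ_flatten (h1 : Z.P1) (h3 : Z.P3) (hbs : Z.IsChain bs)
    (hgap : ¬ Z.HasOccupiedGap bs) (hface : ∀ b ∈ bs, ∀ d ∈ b, ∀ f, d ∉ Z.bdry f) :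
    Z.BPath Set.univ Set.univ bs.flatten := by
  obtain ⟨hne, hblock, hchain⟩ := hbs
  have hnil : [] ∉ bs := fun h => (hblock [] h).1 rfl
  have hstep : bs.flatten.IsChain fun d d' =>
      Z.adj d d' ∧ ∀ d'', Z.adj d d'' →
        gapN (Z.dLet d) (Z.dLet d') ≤ gapN (Z.dLet d) (Z.dLet d'') := by
    refine (List.isChain_flatten hnil).2 ⟨fun b hb => (hblock b hb).2.2.imp ?_, ?_⟩
    · rintro d d' ⟨hadj, h0⟩
      exact ⟨hadj, fun d'' _ => h0 ▸ Nat.zero_le _⟩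
    · refine List.isChain_iff_forall_rel_of_append_cons_cons.2 fun b b' l₁ l₂ hl => ?_
      obtain ⟨d, d', hd, hd', hadj, hone⟩ :=
        List.isChain_iff_forall_rel_of_append_cons_cons.1 hchain hl
      intro e he e' he'
      obtain rfl : d = e := Option.mem_unique hd he
      obtain rfl : d' = e' := Option.mem_unique hd' he'
      refine ⟨hadj, fun d'' hadj' => hone ▸ Nat.one_le_iff_ne_zero.2 fun h0 => ?_⟩
      exact hgap ⟨l₁, b, b', l₂, hl, d, hd, d'', hadj', h0⟩
  refine ⟨?_, fun _ _ => Set.mem_univ _, ?_⟩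
  · obtain ⟨b, hb⟩ := List.exists_mem_of_ne_nil _ hne
    exact fun h => (hblock b hb).1 (List.flatten_eq_nil_iff.1 h b hb)
  · refine hstep.imp_of_mem_imp fun d d' hd _ ⟨hadj, hmin⟩ =>
      ⟨Set.mem_univ _, ⟨Set.mem_univ _, hadj, fun d'' _ => hmin d''⟩, fun hface' => ?_⟩
    obtain ⟨-, f, -, hf⟩ := (faceStep_iff h1 h3).1 hface'
    obtain ⟨b, hb, hdb⟩ := List.mem_flatten.1 hd
    exact hface b hb d hdb f hf

theorem IsChain.eq_singleton_of_subset_bdry (h3 : Z.P3) (hbs : Z.IsChain bs)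
    (hgap : ¬ Z.HasOccupiedGap bs) (hb : b ∈ bs) (hbf : b ⊆ Z.bdry f) : bs = [b] := by
  obtain ⟨l₁, l₂, rfl⟩ := List.append_of_mem hb
  have hnext : l₂ = [] := by
    rcases l₂ with _ | ⟨b', l₂⟩
    · rfl
    obtain ⟨d, -, hd, -⟩ := (List.isChain_append_cons_cons.1 hbs.2.2).2.1
    obtain ⟨x, -, hx⟩ := h3.exists_gapStep_right (hbf (List.mem_of_getLast? hd))
    exact (hgap ⟨l₁, b, b', l₂, rfl, d, hd, x, hx⟩).elim
  have hprev : l₁ = [] := by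
    rcases l₁.eq_nil_or_concat with rfl | ⟨l₁, b', rfl⟩
    · rfl
    rw [List.concat_append] at hbs hgap
    obtain ⟨d, d', hd, hd', h⟩ := (List.isChain_append_cons_cons.1 hbs.2.2).2.1
    obtain ⟨x, -, hx⟩ := h3.exists_gapStep_left (hbf (List.mem_of_head? hd'))
    exact (hgap ⟨l₁, b', b, l₂, rfl, d, hd, _, hx.dRev_right h⟩).elim
  simp [hnext, hprev]

theorem BoundaryReduced.exists_subset_bdry (h1 : Z.P1) (h3 : Z.P3)
    (hbr : Z.BoundaryReduced Set.univ Set.univ) (hbs : Z.IsReducibleChain bs) (hb : b ∈ bs) :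
    ∃ f, b ⊆ Z.bdry f := by
  induction hn : bs.length using Nat.strong_induction_on generalizing bs b with
  | _ n ih =>
  by_cases hgap : Z.HasOccupiedGap bs
  · obtain ⟨l₁, c, c', l₂, rfl, d, hd, x, hx⟩ := hgap
    obtain ⟨d₀, d', hd₀, hd', h⟩ := (List.isChain_append_cons_cons.1 hbs.1.2.2).2.1
    obtain rfl : d₀ = d := Option.mem_unique hd₀ hd
    have hleft := hbs.concat_left hd hx
    have hright := hbs.cons_right hd' (hx.dRev_left h)
    simp only [List.length_append, List.length_cons] at hn
    have ihleft {a} (ha) := ih _ (by grind) (b := a) hleft ha rfl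
    have ihright {a} (ha) := ih _ (by grind) (b := a) hright ha rfl
    simp only [List.mem_append, List.mem_cons] at hb
    rcases hb with hb | rfl | rfl | hb
    · exact ihleft (by simp [hb])
    · exact (ihleft (a := b ++ [x]) (by simp)).imp fun f hf _ h => hf (List.mem_append_left _ h)
    · exact (ihright (List.mem_cons_self ..)).imp fun f hf _ h => hf (List.mem_cons_of_mem _ h)
    · exact ihright (by simp [hb])
  · obtain ⟨c, hc, d, hd, f, hf⟩ : ∃ c ∈ bs, ∃ d ∈ c, ∃ f, d ∈ Z.bdry f := by
      by_contra! hface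
      exact boundaryReduced_iff.1 hbr bs hbs (hbs.1.bPath_univ_flatten h1 h3 hgap hface)
    have hcf : c ⊆ Z.bdry f := subset_bdry_of_isChain h1 h3 (hbs.1.2.1 c hc).2.2 hd hf
    obtain rfl : bs = [c] := hbs.1.eq_singleton_of_subset_bdry h3 hgap hc hcf
    exact ⟨f, List.mem_singleton.1 hb ▸ hcf⟩

/-! ### The faces along a reducible chain -/

/-- The faces of `Z` whose boundary contains some block of `bs`: the faces one attaches in order to
fill a reducible chain `bs`. -/
def facesAlong (Z : Complex g) (bs : List (List Z.D)) : Set Z.F :=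
  {f | ∃ b ∈ bs, b ⊆ Z.bdry f}

theorem IsBlock.relIdx_getElem (hb : Z.IsBlock b) {i : ℕ} (hi : i < b.length) :
    relIdx (Z.dLet b[i]) ≡ relIdx (Z.dLet b[0]) + i [MOD 4 * g] := by
  induction i with
  | zero => rfl
  | succ i ih =>
    have hgap := (List.isChain_iff_getElem.1 hb.2.2 i hi).2
    exact (gapN_eq_zero_iff_relIdx.1 hgap).symm.trans ((ih (by omega)).add_right 1)

theorem IsBlock.nodup (hb : Z.IsBlock b) : b.Nodup := by
  rw [List.nodup_iff_injective_get]
  intro i j hij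
  have hpos := i.pos
  have h : relIdx (Z.dLet b[0]) + i ≡ relIdx (Z.dLet b[0]) + j [MOD 4 * g] := by
    refine (hb.relIdx_getElem i.2).symm.trans (Nat.ModEq.trans ?_ (hb.relIdx_getElem j.2))
    rw [show b[i.1] = b[j.1] from hij]
  have hlen := hb.2.1
  exact Fin.ext (h.add_left_cancel'.eq_of_lt_of_lt (by omega) (by omega))

theorem IsChain.exists_append_left (h3 : Z.P3) (hbs : Z.IsChain (l₁ ++ b :: l₂))
    (hfill : ∀ b' ∈ l₁, ∃ f, b' ⊆ Z.bdry f) :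
    ∃ p, (p ++ b).IsChain (Z.GapStep 0) ∧ p.length = (if l₁ = [] then 0 else 1) ∧
      ∀ d ∈ p, ∃ f ∈ Z.facesAlong l₁, Z.dRev d ∈ Z.bdry f := by
  have hb : b.IsChain (Z.GapStep 0) := (hbs.2.1 b (by simp)).2.2
  rcases l₁.eq_nil_or_concat with rfl | ⟨l₁, b', rfl⟩
  · exact ⟨[], hb, rfl, by simp⟩
  rw [List.concat_append] at hbs
  obtain ⟨d, d', hd, hd', hstep⟩ := (List.isChain_append_cons_cons.1 hbs.2.2).2.1
  obtain ⟨f, hf⟩ := hfill b' (by simp)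
  obtain ⟨x, hxf, hx⟩ := h3.exists_gapStep_right (hf (List.mem_of_getLast? hd))
  refine ⟨[Z.dRev x], List.isChain_cons.2 ⟨fun _ h => ?_, hb⟩, by simp, ?_⟩
  · exact Option.mem_unique hd' h ▸ hx.dRev_left hstep
  · rintro _ (_ | ⟨_, ⟨⟩⟩)
    exact ⟨f, ⟨b', by simp, hf⟩, (dRev_dRev x).symm ▸ hxf⟩

theorem IsChain.exists_append_right (h3 : Z.P3) (hbs : Z.IsChain (l₁ ++ b :: l₂))
    (hfill : ∀ b' ∈ l₂, ∃ f, b' ⊆ Z.bdry f) :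
    ∃ q, (b ++ q).IsChain (Z.GapStep 0) ∧ q.length = (if l₂ = [] then 0 else 1) ∧
      ∀ d ∈ q, ∃ f ∈ Z.facesAlong l₂, Z.dRev d ∈ Z.bdry f := by
  have hb : b.IsChain (Z.GapStep 0) := (hbs.2.1 b (by simp)).2.2
  rcases l₂ with _ | ⟨b', l₂⟩
  · exact ⟨[], by simpa using hb, rfl, by simp⟩
  obtain ⟨d, d', hd, hd', hstep⟩ := (List.isChain_append_cons_cons.1 hbs.2.2).2.1
  obtain ⟨f, hf⟩ := hfill b' (by simp)
  obtain ⟨x, hxf, hx⟩ := h3.exists_gapStep_left (hf (List.mem_of_head? hd'))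
  refine ⟨[Z.dRev x], List.isChain_append.2 ⟨hb, .singleton _, ?_⟩, by simp, ?_⟩
  · rintro _ h _ ⟨⟩
    exact Option.mem_unique hd h ▸ hx.dRev_right hstep
  · rintro _ (_ | ⟨_, ⟨⟩⟩)
    exact ⟨f, ⟨b', by simp, hf⟩, (dRev_dRev x).symm ▸ hxf⟩

theorem IsReducibleChain.exists_isBlock_subset_bdry (h1 : Z.P1) (h3 : Z.P3)
    (hbs : Z.IsReducibleChain bs) (hfill : ∀ b ∈ bs, ∃ f, b ⊆ Z.bdry f) (hb : b ∈ bs)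
    (hbf : b ⊆ Z.bdry f) :
    ∃ c, Z.IsBlock c ∧ c.length = 2 * g + 1 ∧ c ⊆ Z.bdry f ∧
      ∀ d ∈ c, d ∈ b ∨ ∃ f' ∈ Z.facesAlong bs, Z.dRev d ∈ Z.bdry f' := by
  obtain ⟨l₁, l₂, rfl⟩ := List.append_of_mem hb
  have hne := hbs.ne_nil hb
  obtain ⟨p, hp, hplen, hpf⟩ := hbs.1.exists_append_left h3 fun b' h => hfill b' (by simp [h])
  obtain ⟨q, hq, hqlen, hqf⟩ := hbs.1.exists_append_right h3 fun b' h => hfill b' (by simp [h])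
  have hchain : (p ++ b ++ q).IsChain (Z.GapStep 0) := hp.append_overlap hq hne
  have hlen : (p ++ b ++ q).length = 2 * g + 1 := by
    have := hbs.length_add_one
    simp only [List.length_append, hplen, hqlen]
    split_ifs at this ⊢ <;> omega
  obtain ⟨d, hd⟩ := List.exists_mem_of_ne_nil _ hne
  have hg := pos_of_dart d
  refine ⟨p ++ b ++ q, ⟨by simp [hne], by omega, hchain⟩, hlen,
    subset_bdry_of_isChain h1 h3 hchain (by simp [hd]) (hbf hd), fun x hx => ?_⟩
  simp only [List.mem_append, or_assoc] at hx
  rcases hx with hx | hx | hx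
  · obtain ⟨f', ⟨b', hb', hbf'⟩, hxf'⟩ := hpf x hx
    exact .inr ⟨f', ⟨b', by simp [hb'], hbf'⟩, hxf'⟩
  · exact .inl hx
  · obtain ⟨f', ⟨b', hb', hbf'⟩, hxf'⟩ := hqf x hx
    exact .inr ⟨f', ⟨b', by simp [hb'], hbf'⟩, hxf'⟩

theorem finite_facesAlong (h1 : Z.P1) (h3 : Z.P3) (hbs : ∀ b ∈ bs, b ≠ []) :
    (Z.facesAlong bs).Finite := by
  have hfin : (⋃ b ∈ {b | b ∈ bs}, {f | b ⊆ Z.bdry f}).Finite := by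
    refine (List.finite_toSet bs).biUnion fun b hb => Set.Subsingleton.finite ?_
    obtain ⟨d, hd⟩ := List.exists_mem_of_ne_nil b (hbs b hb)
    exact fun f hf f' hf' => eq_of_mem_bdry h1 h3 (hf hd) (hf' hd)
  exact hfin.subset fun f ⟨b, hb, hbf⟩ => Set.mem_biUnion hb hbf

theorem IsReducibleChain.exists_bStep (hbs : Z.IsReducibleChain bs)
    (hpath : Z.BPath sE sF bs.flatten) (hb : b ∈ bs) : ∃ d ∈ b, ∃ d', Z.bStep sE sF d d' := by
  obtain ⟨l₁, l₂, rfl⟩ := List.append_of_mem hb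
  rcases b with _ | ⟨d, b⟩
  · exact (hbs.ne_nil hb rfl).elim
  have hstep := hpath.2.2
  rcases hrest : b ++ l₂.flatten with _ | ⟨d', rest⟩
  · have hg := pos_of_dart d
    have hlen := hbs.length_add_one
    have hl₂ : l₂ = [] := List.eq_nil_iff_forall_not_mem.2 fun c hc =>
      hbs.ne_nil (by simp [hc]) (List.flatten_eq_nil_iff.1 (List.append_eq_nil_iff.1 hrest).2 c hc)
    simp only [hl₂, (List.append_eq_nil_iff.1 hrest).1, List.length_singleton, if_true] at hlen
    omega
  · rw [List.flatten_append, List.flatten_cons, List.cons_append, hrest] at hstep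
    exact ⟨d, List.mem_cons_self .., d', (List.isChain_append_cons_cons.1 hstep).2.1⟩

end Complex

/-! ### Shortening the boundary of a subcomplex -/

namespace SubC

variable {g : ℕ} {Z : Complex g} {S T : SubC Z} {N : Set Z.F} {d d' : Z.D} {f : Z.F}
  {b c : List Z.D} {bs : List (List Z.D)}

/-- The subcomplex obtained from `T` by adding the faces in `N` with all their edges and
vertices. -/
def attach (T : SubC Z) (N : Set Z.F) : SubC Z :=
  let E := T.sE ∪ ⋃ f ∈ N, Prod.fst '' {d | d ∈ Z.bdry f}
  ⟨T.sV ∪ (Z.src '' E ∪ Z.dst '' E), E, T.sF ∪ N⟩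

theorem le_attach (T : SubC Z) (N : Set Z.F) : T.le (T.attach N) :=
  ⟨Set.subset_union_left, Set.subset_union_left, Set.subset_union_left⟩

theorem IsSub.attach (hT : T.IsSub) (N : Set Z.F) : (T.attach N).IsSub := by
  refine ⟨fun e he => ⟨.inr (.inl ⟨e, he, rfl⟩), .inr (.inr ⟨e, he, rfl⟩)⟩, ?_⟩
  rintro f (hf | hf) d hd
  · exact .inl (hT.2 f hf d hd)
  · exact .inr (Set.mem_biUnion hf ⟨d, hd, rfl⟩)

theorem Compact.attach (hT : T.Compact) (hN : N.Finite) : (T.attach N).Compact := by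
  have hE : (T.attach N).sE.Finite :=
    hT.2.1.union (hN.biUnion fun f _ => (List.finite_toSet (Z.bdry f)).image _)
  exact ⟨hT.1.union ((hE.image _).union (hE.image _)), hE, hT.2.2.union hN⟩

/-- The darts of `T` along which no face of `T` is glued, that is, the darts running along the
boundary of the thick version of `T`. Their number measures the complexity of `T`. -/
def bdryDarts (T : SubC Z) : Set Z.D := {d | d.1 ∈ T.sE ∧ ∀ f ∈ T.sF, d ∉ Z.bdry f}

/-- The darts around `f` whose edge already lies in `T`. -/
def oldDarts (T : SubC Z) (f : Z.F) : Set Z.D := {d | d ∈ Z.bdry f ∧ d.1 ∈ T.sE}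

/-- The darts around `f` whose edge lies neither in `T` nor between two faces of `N`. -/
def freshDarts (T : SubC Z) (N : Set Z.F) (f : Z.F) : Set Z.D :=
  {d | d ∈ Z.bdry f ∧ d.1 ∉ T.sE ∧ ∀ f' ∈ N, Z.dRev d ∉ Z.bdry f'}

theorem Compact.finite_bdryDarts (hT : T.Compact) : T.bdryDarts.Finite :=
  (hT.2.1.prod Set.finite_univ).subset fun _ hd => ⟨hd.1, Set.mem_univ _⟩

theorem bdryDarts_attach_subset (T : SubC Z) (N : Set Z.F) :
    (T.attach N).bdryDarts ⊆
      (T.bdryDarts \ ⋃ f ∈ N, T.oldDarts f) ∪ Z.dRev '' ⋃ f ∈ N, T.freshDarts N f := by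
  intro d ⟨hdE, hdF⟩
  by_cases hd : d.1 ∈ T.sE
  · refine .inl ⟨⟨hd, fun f hf => hdF f (.inl hf)⟩, fun hold => ?_⟩
    obtain ⟨f, hf, hdf, -⟩ := Set.mem_iUnion₂.1 hold
    exact hdF f (.inr hf) hdf
  · obtain ⟨f, hf, d', hd', hdd'⟩ := Set.mem_iUnion₂.1 (hdE.resolve_left hd)
    obtain rfl : d' = Z.dRev d := by
      obtain ⟨e, b⟩ := d
      obtain ⟨_, b'⟩ := d'
      obtain rfl : _ = e := hdd'
      have : b' ≠ b := fun h => hdF f (.inr hf) (h ▸ hd')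
      simpa [Complex.dRev, Bool.eq_not_iff] using this
    refine .inr ⟨_, Set.mem_biUnion hf ⟨hd', hd, fun f' hf' => ?_⟩, Complex.dRev_dRev d⟩
    exact (Complex.dRev_dRev d).symm ▸ hdF f' (.inr hf')

theorem finite_oldDarts (T : SubC Z) (f : Z.F) : (T.oldDarts f).Finite :=
  (List.finite_toSet (Z.bdry f)).subset fun _ => And.left

theorem pairwiseDisjoint_oldDarts (h1 : Z.P1) (h3 : Z.P3) (T : SubC Z) (N : Set Z.F) :
    N.PairwiseDisjoint T.oldDarts := fun _ _ _ _ hne =>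
  Set.disjoint_left.2 fun _ hd hd' => hne (Complex.eq_of_mem_bdry h1 h3 hd.1 hd'.1)

theorem oldDarts_subset_bdryDarts (h1 : Z.P1) (h3 : Z.P3) (hf : f ∉ T.sF) :
    T.oldDarts f ⊆ T.bdryDarts := fun _ hd =>
  ⟨hd.2, fun _ hf' hd' => hf (Complex.eq_of_mem_bdry h1 h3 hd.1 hd' ▸ hf')⟩

theorem Compact.ncard_bdryDarts_attach_lt (hT : T.Compact) (h1 : Z.P1) (h3 : Z.P3) (hN : N.Finite)
    (hNT : ∀ f ∈ N, f ∉ T.sF) (hle : ∀ f ∈ N, (T.freshDarts N f).ncard ≤ (T.oldDarts f).ncard)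
    (hlt : ∃ f ∈ N, (T.freshDarts N f).ncard < (T.oldDarts f).ncard) :
    (T.attach N).bdryDarts.ncard < T.bdryDarts.ncard := by
  lift N to Finset Z.F using hN
  simp only [Finset.mem_coe] at hNT hle hlt
  set old := ⋃ f ∈ N, T.oldDarts f with hold
  set fresh := ⋃ f ∈ N, T.freshDarts N f
  have hfin := hT.finite_bdryDarts
  have hfreshfin : fresh.Finite := N.finite_toSet.biUnion fun f _ =>
    (List.finite_toSet (Z.bdry f)).subset fun _ => And.left
  have hsub : old ⊆ T.bdryDarts :=
    Set.iUnion₂_subset fun f hf => oldDarts_subset_bdryDarts h1 h3 (hNT f hf)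
  have hlt' : fresh.ncard < old.ncard := calc
    fresh.ncard ≤ ∑ f ∈ N, (T.freshDarts N f).ncard := N.set_ncard_biUnion_le _
    _ < ∑ f ∈ N, (T.oldDarts f).ncard := Finset.sum_lt_sum hle hlt
    _ = old.ncard := by
      rw [hold, ← finsum_mem_coe_finset]
      exact (N.finite_toSet.ncard_biUnion (fun f _ => T.finite_oldDarts f)
        (pairwiseDisjoint_oldDarts h1 h3 T N)).symm
  calc (T.attach N).bdryDarts.ncard
      ≤ ((T.bdryDarts \ old) ∪ Z.dRev '' fresh).ncard :=
        Set.ncard_le_ncard (bdryDarts_attach_subset T N) (hfin.sdiff.union (hfreshfin.image _))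
    _ ≤ (T.bdryDarts \ old).ncard + fresh.ncard :=
        (Set.ncard_union_le _ _).trans (Nat.add_le_add_left (Set.ncard_image_le hfreshfin) _)
    _ < (T.bdryDarts \ old).ncard + old.ncard := Nat.add_lt_add_left hlt' _
    _ = T.bdryDarts.ncard := Set.ncard_sdiff_add_ncard_of_subset hsub hfin

theorem IsSub.notMem_of_bStep (hT : T.IsSub) (h1 : Z.P1) (h3 : Z.P3)
    (hstep : Z.bStep T.sE T.sF d d') (hd : d ∈ Z.bdry f) : f ∉ T.sF := fun hf => by
  obtain ⟨-, ⟨-, hadj, hmin⟩, hface⟩ := hstep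
  obtain ⟨x, hxf, hx⟩ := h3.exists_gapStep_right hd
  have h0 : gapN (Z.dLet d) (Z.dLet d') = 0 :=
    Nat.le_zero.1 (hx.2 ▸ hmin x (hT.2 f hf x hxf) hx.1)
  exact hface ((Complex.faceStep_iff h1 h3).2 ⟨⟨hadj, h0⟩, f, hf, hd⟩)

theorem length_le_ncard_oldDarts (hb : b.Nodup) (hbE : Z.InSet T.sE b) (hbf : b ⊆ Z.bdry f) :
    b.length ≤ (T.oldDarts f).ncard :=
  ncard_setOf_mem hb ▸
    Set.ncard_le_ncard (fun d hd => ⟨hbf hd, hbE d hd⟩) (T.finite_oldDarts f)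

theorem ncard_freshDarts_add_length_le (h3 : Z.P3) (hc : c.Nodup) (hcf : c ⊆ Z.bdry f)
    (hfresh : ∀ d ∈ c, d ∉ T.freshDarts N f) :
    (T.freshDarts N f).ncard + c.length ≤ 4 * g := by
  have hfin := List.finite_toSet (Z.bdry f)
  have hsub : T.freshDarts N f ⊆ {d | d ∈ Z.bdry f} := fun _ => And.left
  have hdisj : Disjoint (T.freshDarts N f) {d | d ∈ c} :=
    Set.disjoint_right.2 hfresh
  rw [← h3.length_bdry f, ← ncard_setOf_mem hc, ← ncard_setOf_mem (h3.nodup_bdry f),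
    ← Set.ncard_union_eq hdisj (hfin.subset hsub) (List.finite_toSet c)]
  exact Set.ncard_le_ncard (Set.union_subset hsub hcf) hfin

theorem ncard_freshDarts_lt (h1 : Z.P1) (h3 : Z.P3) (hbs : Z.IsReducibleChain bs)
    (hfill : ∀ b ∈ bs, ∃ f, b ⊆ Z.bdry f) (hbsE : Z.InSet T.sE bs.flatten) (hb : b ∈ bs)
    (hbf : b ⊆ Z.bdry f) : (T.freshDarts (Z.facesAlong bs) f).ncard < 2 * g := by
  obtain ⟨c, hc, hclen, hcf, hcb⟩ := hbs.exists_isBlock_subset_bdry h1 h3 hfill hb hbf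
  have := ncard_freshDarts_add_length_le (T := T) (N := Z.facesAlong bs) h3 hc.nodup hcf ?_
  · omega
  · rintro d hd ⟨-, hdE, hdN⟩
    rcases hcb d hd with h | ⟨f', hf', hdf'⟩
    · exact hdE (hbsE d (List.mem_flatten.2 ⟨b, hb, h⟩))
    · exact hdN f' hf' hdf'

theorem Compact.ncard_bdryDarts_attach_facesAlong_lt (hc : T.Compact) (hT : T.IsSub) (h1 : Z.P1)
    (h3 : Z.P3) (hbs : Z.IsReducibleChain bs) (hfill : ∀ b ∈ bs, ∃ f, b ⊆ Z.bdry f)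
    (hpath : Z.BPath T.sE T.sF bs.flatten) :
    (T.attach (Z.facesAlong bs)).bdryDarts.ncard < T.bdryDarts.ncard := by
  have hold {b f} (hb : b ∈ bs) (hbf : b ⊆ Z.bdry f) : b.length ≤ (T.oldDarts f).ncard :=
    length_le_ncard_oldDarts (hbs.1.2.1 b hb).nodup
      (fun d hd => hpath.2.1 d (List.mem_flatten.2 ⟨b, hb, hd⟩)) hbf
  have hfresh {b f} (hb : b ∈ bs) (hbf : b ⊆ Z.bdry f) :=
    ncard_freshDarts_lt h1 h3 hbs hfill hpath.2.1 hb hbf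
  refine hc.ncard_bdryDarts_attach_lt h1 h3
    (Complex.finite_facesAlong h1 h3 fun b hb => hbs.ne_nil hb) ?_ ?_ ?_
  · rintro f ⟨b, hb, hbf⟩
    obtain ⟨d, hd, d', hstep⟩ := hbs.exists_bStep hpath hb
    exact hT.notMem_of_bStep h1 h3 hstep (hbf hd)
  · rintro f ⟨b, hb, hbf⟩
    have hlen : 2 * g ≤ b.length + 1 := by
      obtain ⟨l₁, l₂, rfl⟩ := List.append_of_mem hb
      have := hbs.length_add_one
      omega
    have := hold hb hbf
    have := hfresh hb hbf
    omega
  · obtain ⟨b, l, rfl⟩ := List.exists_cons_of_ne_nil hbs.1.1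
    have hlen := hbs.length_add_one (l₁ := [])
    obtain ⟨f, hbf⟩ := hfill b (List.mem_cons_self ..)
    have := hold (List.mem_cons_self ..) hbf
    have := hfresh (List.mem_cons_self ..) hbf
    rw [if_pos rfl] at hlen
    exact ⟨f, ⟨b, List.mem_cons_self .., hbf⟩, by omega⟩

theorem le.trans {U : SubC Z} (hST : S.le T) (hTU : T.le U) : S.le U :=
  ⟨hST.1.trans hTU.1, hST.2.1.trans hTU.2.1, hST.2.2.trans hTU.2.2⟩

theorem exists_compact_boundaryReduced (h1 : Z.P1) (h3 : Z.P3)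
    (hbr : Z.BoundaryReduced Set.univ Set.univ) (hS : S.IsSub) (hc : S.Compact) :
    ∃ T : SubC Z, T.IsSub ∧ S.le T ∧ T.Compact ∧ Z.BoundaryReduced T.sE T.sF := by
  obtain ⟨T, ⟨hT, hST, hTc⟩, hmin⟩ := exists_minimalFor_of_wellFoundedLT
    (fun T : SubC Z => T.IsSub ∧ S.le T ∧ T.Compact) (fun T => T.bdryDarts.ncard)
    ⟨S, hS, ⟨subset_rfl, subset_rfl, subset_rfl⟩, hc⟩
  refine ⟨T, hT, hST, hTc, Complex.boundaryReduced_iff.2 fun bs hbs hpath => ?_⟩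
  have hfill : ∀ b ∈ bs, ∃ f, b ⊆ Z.bdry f := fun b hb => hbr.exists_subset_bdry h1 h3 hbs hb
  have hN := Complex.finite_facesAlong h1 h3 fun b hb => hbs.ne_nil hb
  have hlt := hTc.ncard_bdryDarts_attach_facesAlong_lt hT h1 h3 hbs hfill hpath
  exact hlt.not_ge (hmin ⟨hT.attach _, hST.trans (T.le_attach _), hTc.attach hN⟩ hlt.le)

theorem Compact.bRcl (hc : T.Compact) (hT : T.IsSub) (hST : S.le T)
    (hbr : Z.BoundaryReduced T.sE T.sF) : (BRcl Z S).Compact :=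
  have hmem : T ∈ {T : SubC Z | T.IsSub ∧ S.le T ∧ Z.BoundaryReduced T.sE T.sF} := ⟨hT, hST, hbr⟩
  ⟨hc.1.subset (Set.biInter_subset_of_mem hmem), hc.2.1.subset (Set.biInter_subset_of_mem hmem),
    hc.2.2.subset (Set.biInter_subset_of_mem hmem)⟩

end SubC

/-! ### Properties inherited from the ambient covering -/

namespace Hom

variable {g : ℕ} {Y Z : Complex g} (φ : Hom Y Z)

theorem dTail_mD (d : Y.D) : Z.dTail (φ.mD d) = φ.mV (Y.dTail d) := by
  obtain ⟨e, _ | _⟩ := d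
  exacts [φ.hdst e, φ.hsrc e]

theorem dHead_mD (d : Y.D) : Z.dHead (φ.mD d) = φ.mV (Y.dHead d) := by
  obtain ⟨e, _ | _⟩ := d
  exacts [φ.hsrc e, φ.hdst e]

theorem wordOf_map_mD (l : List Y.D) : Z.wordOf (l.map φ.mD) = Y.wordOf l := by
  simp only [Complex.wordOf, List.map_map]
  exact List.map_congr_left fun d _ => Prod.ext (φ.hlab d.1) rfl

variable {φ}

theorem Inj.p1 (hφ : φ.Inj) (h1 : Z.P1) : Y.P1 := by
  refine ⟨fun e e' h hl => hφ.2.1 (h1.1 _ _ ?_ ?_), fun e e' h hl => hφ.2.1 (h1.2 _ _ ?_ ?_)⟩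
  · rw [φ.hsrc, φ.hsrc, h]
  · rw [φ.hlab, φ.hlab, hl]
  · rw [φ.hdst, φ.hdst, h]
  · rw [φ.hlab, φ.hlab, hl]

theorem Inj.exists_walkFrom (hφ : φ.Inj) {u : Y.V} {v : Z.V} {l : List Y.D}
    (h : Z.WalkFrom (φ.mV u) v (l.map φ.mD)) : ∃ v', φ.mV v' = v ∧ Y.WalkFrom u v' l := by
  induction l generalizing u with
  | nil => exact ⟨u, Complex.walkFrom_nil_iff.1 h, .nil u⟩
  | cons d l ih =>
    obtain ⟨hu, h⟩ := Complex.walkFrom_cons_iff.1 h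
    obtain ⟨v', hv', hw⟩ := ih (φ.dHead_mD d ▸ h)
    exact ⟨v', hv', Complex.walkFrom_cons_iff.2 ⟨hφ.1 ((φ.dTail_mD d).symm.trans hu), hw⟩⟩

theorem Inj.p3 (hφ : φ.Inj) (hg : 0 < g) (h3 : Z.P3) : Y.P3 := by
  have hbdry (f : Y.F) : Z.bdry (φ.mF f) = (Y.bdry f).map φ.mD := φ.hbdry f
  refine ⟨fun f => ?_, fun f f' h => hφ.2.2 (h3.2 (by rw [hbdry, hbdry, h]))⟩
  obtain ⟨⟨v, hv⟩, hword⟩ := h3.1 (φ.mF f)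
  have hlen := h3.length_bdry (φ.mF f)
  rw [hbdry] at hv hword hlen
  rw [wordOf_map_mD] at hword
  refine ⟨?_, hword⟩
  obtain ⟨d, l, hl⟩ : ∃ d l, Y.bdry f = d :: l := List.exists_cons_of_ne_nil fun h => by
    rw [h, List.map_nil, List.length_nil] at hlen
    omega
  obtain rfl : φ.mV (Y.dTail d) = v := by
    rw [hl, List.map_cons] at hv
    exact (φ.dTail_mD d).symm.trans (Complex.walkFrom_cons_iff.1 hv).1
  obtain ⟨v', hv', hw⟩ := hφ.exists_walkFrom hv
  exact ⟨Y.dTail d, hφ.1 hv' ▸ hw⟩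

end Hom

theorem statement_4_general {g : ℕ} {Z : Complex g} (h1 : Z.P1) (h3 : Z.P3)
    (hbr : Z.BoundaryReduced Set.univ Set.univ)
    {S : SubC Z} (hS : S.IsSub) (hc : S.Compact) :
    (BRcl Z S).Compact :=
  let ⟨_, hT, hST, hTc, hTbr⟩ := SubC.exists_compact_boundaryReduced h1 h3 hbr hS hc
  hTc.bRcl hT hST hTbr

/-- Let `Y` (= `S`) be a compact tiled surface embedded in a
boundary reduced tiled surface `Z`.  Then the BR-closure `BR(Y ↪ Z)` is compact. -/
theorem statement_4 (g : ℕ) (hg : 2 ≤ g) (Z : Complex g) (hZ : Z.IsTiledSurface)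
    (hbr : Z.BoundaryReduced Set.univ Set.univ)
    (S : SubC Z) (hS : S.IsSub) (hc : S.Compact) :
    (BRcl Z S).Compact := by
  obtain ⟨C, hC, φ, hφ⟩ := hZ
  exact statement_4_general (hφ.p1 hC.1) (hφ.p3 (by omega) hC.2.1) hbr hS hc

end CS

end
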